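/- Modified log-Sobolev constant of the up-down walk: Let s_0, …, s_{d−2} be reals with s_k ≥ 1, and suppose that for every 2 ≤ k ≤ d, every S ∈ 𝒞(k−2), and every g : 𝒞_S(2) → ℝ_{≥0}, one has Ent_{π_{S,2}}(g) ≥ s_{k−2} · Ent_{π_{S,1}}(P_{S,1}^↑ g). Define v_0 := s_0 and v_k := s_k − (s_k − 1)/v_{k−1}. Then for every 1 ≤ k ≤ d−1, ρ(P_k^∧) ≥ 1 − 1/v_{k−1}. -/

import Mathlib

/-!
The proof goes through entropy contraction. For a function `f ≥ 0` on level `j + 2`, the entropies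
of `f`, of its projection `f₁ = P_{j+1}^↑ f` and of `f₀ = P_j^↑ f₁` differ by averages over
`S ∼ π_j` of local entropies in the link of `S`; hence the local hypothesis yields
`Ent f - Ent f₀ ≥ s_j (Ent f₁ - Ent f₀)` (`local_to_global`). Since `Ent` vanishes on level `0`,
induction on `j` together with the recursion of `v` gives `Ent f ≥ v_j · Ent (P_{j+1}^↑ f)`
(`entropy_contraction`).

For the up-down walk and `f > 0` on level `k`, put `G = P_k^↑ P_{k+1}^↓ f`. By reversibility
`𝔈(f, log f) = E[f log f] - E[G log f]`, and the Gibbs variational principle (with `E G = E f`)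
bounds this below by `Ent f - Ent G` (`dirichlet_ge`). The contraction applied to `P_{k+1}^↓ f`,
followed by data processing for the down operator (`pEnt_downOp_le`), gives
`Ent G ≤ Ent (P_{k+1}^↓ f) / v_{k-1} ≤ Ent f / v_{k-1}`.

As the infimum of an empty set of reals is `0` in Lean, one also needs a positive function of
nonzero entropy, which exists because level `k` has at least two faces (`exists_pEnt_ne_zero`).
-/

open Finset

noncomputable section

variable {E : Type*} [Fintype E] [DecidableEq E]

/-- The faces of cardinality `k` of the set family `C`. -/
def faces (C : Finset (Finset E)) (k : ℕ) : Finset (Finset E) :=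
  C.filter fun S => S.card = k

/-- `C` is a pure simplicial complex of dimension `d`: it is nonempty, closed under
taking subsets, and every face is contained in a face of cardinality `d`
(hence all maximal faces have cardinality `d`). -/
def IsPureComplex (C : Finset (Finset E)) (d : ℕ) : Prop :=
  C.Nonempty ∧ (∀ S ∈ C, ∀ T ⊆ S, T ∈ C) ∧ (∀ S ∈ C, ∃ T ∈ C, S ⊆ T ∧ T.card = d)

/-- `pid` is a probability distribution with full support on the top level faces. -/
def IsTopDist (C : Finset (Finset E)) (d : ℕ) (pid : Finset E → ℝ) : Prop :=
  (∀ T ∈ faces C d, 0 < pid T) ∧ ∑ T ∈ faces C d, pid T = 1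

/-- The (unnormalised) weight of a face: total top-level mass above it. -/
def wgt (C : Finset (Finset E)) (d : ℕ) (pid : Finset E → ℝ) (S : Finset E) : ℝ :=
  ∑ T ∈ (faces C d).filter (fun T => S ⊆ T), pid T

/-- The distribution `π_k` at level `k`: `π_k(S) ∝ Σ_{T ∈ C(d), T ⊇ S} π_d(T)`. -/
def piLev (C : Finset (Finset E)) (d : ℕ) (pid : Finset E → ℝ) (k : ℕ) (S : Finset E) : ℝ :=
  if S ∈ faces C k then wgt C d pid S / ∑ T ∈ faces C k, wgt C d pid T else 0

/-- The level-`k` faces of the link of the face `S`. -/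
def linkFaces (C : Finset (Finset E)) (S : Finset E) (k : ℕ) : Finset (Finset E) :=
  Finset.univ.powerset.filter fun T => S ∩ T = ∅ ∧ S ∪ T ∈ C ∧ T.card = k

/-- The distribution `π_{S,k}` on the level-`k` faces of the link of `S`:
`π_{S,k}(T) ∝ π_{|S|+k}(S ∪ T)`. -/
def linkPi (C : Finset (Finset E)) (d : ℕ) (pid : Finset E → ℝ) (S : Finset E) (k : ℕ)
    (T : Finset E) : ℝ :=
  if T ∈ linkFaces C S k then
    piLev C d pid (S.card + k) (S ∪ T) /
      ∑ T' ∈ linkFaces C S k, piLev C d pid (S.card + k) (S ∪ T')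
  else 0

/-- Generic up operator with respect to a measure `ν` on a collection `dom` of faces:
from `R` move to a superset `T ∈ dom` with probability proportional to `ν T`.
Acts on functions on `dom`, producing a function on the level below. -/
def upWith (ν : Finset E → ℝ) (dom : Finset (Finset E)) (f : Finset E → ℝ) (R : Finset E) : ℝ :=
  ∑ T ∈ dom.filter (fun T => R ⊆ T),
    (ν T / ∑ T' ∈ dom.filter (fun T' => R ⊆ T'), ν T') * f T

/-- The up operator `P_k^↑`, acting on functions on `C(k+1)` and producing a function
on `C(k)`. -/
def upOp (C : Finset (Finset E)) (d : ℕ) (pid : Finset E → ℝ) (k : ℕ) :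
    (Finset E → ℝ) → Finset E → ℝ :=
  upWith (piLev C d pid (k+1)) (faces C (k+1))

/-- The down operator `P_k^↓` (uniform removal of an element), acting on functions
on `C(k-1)` and producing a function on `C(k)`. -/
def downOp (k : ℕ) (g : Finset E → ℝ) (S : Finset E) : ℝ :=
  (1 / (k : ℝ)) * ∑ i ∈ S, g (S.erase i)

/-- The down-up walk `P_k^∨ = P_k^↓ P_{k-1}^↑` on `C(k)`, as an operator on functions. -/
def downUp (C : Finset (Finset E)) (d : ℕ) (pid : Finset E → ℝ) (k : ℕ)
    (f : Finset E → ℝ) : Finset E → ℝ :=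
  downOp k (upOp C d pid (k-1) f)

/-- The up-down walk `P_k^∧ = P_k^↑ P_{k+1}^↓` on `C(k)`, as an operator on functions. -/
def upDown (C : Finset (Finset E)) (d : ℕ) (pid : Finset E → ℝ) (k : ℕ)
    (f : Finset E → ℝ) : Finset E → ℝ :=
  upOp C d pid k (downOp (k+1) f)

/-- The up operator `P_{S,k}^↑` on the link of `S`, acting on functions on `C_S(k+1)`
and producing a function on `C_S(k)`. -/
def linkUp (C : Finset (Finset E)) (d : ℕ) (pid : Finset E → ℝ) (S : Finset E) (k : ℕ) :
    (Finset E → ℝ) → Finset E → ℝ :=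
  upWith (linkPi C d pid S (k+1)) (linkFaces C S (k+1))

/-- The up-down walk `P_{S,k}^∧` on the level-`k` faces of the link of `S`. -/
def linkUpDown (C : Finset (Finset E)) (d : ℕ) (pid : Finset E → ℝ) (S : Finset E) (k : ℕ)
    (f : Finset E → ℝ) : Finset E → ℝ :=
  linkUp C d pid S k (downOp (k+1) f)

/-- The local walk `G_S := 2 P_{S,1}^∧ - I` on the vertices of the link of `S`. -/
def localWalk (C : Finset (Finset E)) (d : ℕ) (pid : Finset E → ℝ) (S : Finset E)
    (f : Finset E → ℝ) (T : Finset E) : ℝ :=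
  2 * linkUpDown C d pid S 1 f T - f T

/-- Variance of `f` with respect to the measure `μ` on `dom`. -/
def pVar (μ : Finset E → ℝ) (dom : Finset (Finset E)) (f : Finset E → ℝ) : ℝ :=
  (∑ x ∈ dom, μ x * f x ^ 2) - (∑ x ∈ dom, μ x * f x) ^ 2

/-- Relative entropy `Ent_μ(f) = E_μ[f log f] - E_μ[f] log E_μ[f]` of `f` with respect to
the measure `μ` on `dom` (note `Real.log 0 = 0`, giving the convention `0 log 0 = 0`). -/
def pEnt (μ : Finset E → ℝ) (dom : Finset (Finset E)) (f : Finset E → ℝ) : ℝ :=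
  (∑ x ∈ dom, μ x * (f x * Real.log (f x))) -
    (∑ x ∈ dom, μ x * f x) * Real.log (∑ x ∈ dom, μ x * f x)

/-- The Dirichlet form `𝔈_P(f,g) = Σ_x μ(x) f(x) ((I - P) g)(x)` of a Markov operator `P`
reversible with respect to `μ` on `dom`. -/
def pDiri (μ : Finset E → ℝ) (dom : Finset (Finset E))
    (P : (Finset E → ℝ) → Finset E → ℝ) (f g : Finset E → ℝ) : ℝ :=
  ∑ x ∈ dom, μ x * f x * (g x - P g x)

/-- The second largest eigenvalue of a Markov operator `P` reversible with respect to the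
distribution `μ` on `dom`, via the variational characterisation: the supremum of Rayleigh
quotients `⟨f, Pf⟩_μ / ⟨f, f⟩_μ` over `f` orthogonal to the constants in `L²(μ)`. -/
noncomputable def lamTwo (μ : Finset E → ℝ) (dom : Finset (Finset E))
    (P : (Finset E → ℝ) → Finset E → ℝ) : ℝ :=
  sSup {r : ℝ | ∃ f : Finset E → ℝ,
    (∑ x ∈ dom, μ x * f x = 0) ∧ (∑ x ∈ dom, μ x * f x ^ 2 ≠ 0) ∧
    r = (∑ x ∈ dom, μ x * f x * P f x) / ∑ x ∈ dom, μ x * f x ^ 2}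

/-- The modified log-Sobolev constant `ρ(P)` of a Markov operator `P` reversible with
respect to `μ` on `dom`. -/
noncomputable def mlsConst (μ : Finset E → ℝ) (dom : Finset (Finset E))
    (P : (Finset E → ℝ) → Finset E → ℝ) : ℝ :=
  sInf {r : ℝ | ∃ f : Finset E → ℝ, (∀ x ∈ dom, 0 < f x) ∧ pEnt μ dom f ≠ 0 ∧
    r = pDiri μ dom P f (fun x => Real.log (f x)) / pEnt μ dom f}

/-- The sequence `v_k` built from contraction factors `s_k`: `v_0 = s_0` and
`v_k = s_k - (s_k - 1)/v_{k-1}`. -/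
noncomputable def vOfS (s : ℕ → ℝ) : ℕ → ℝ
  | 0 => s 0
  | k + 1 => s (k+1) - (s (k+1) - 1) / vOfS s k

/-! ### Double counting of nested faces -/

lemma mem_faces {C : Finset (Finset E)} {k : ℕ} {S : Finset E} :
    S ∈ faces C k ↔ S ∈ C ∧ S.card = k := by
  simp [faces]

lemma sum_pairs {C : Finset (Finset E)} (hdown : ∀ S ∈ C, ∀ T ⊆ S, T ∈ C) (k : ℕ)
    (F : Finset E → Finset E → ℝ) :
    ∑ S ∈ faces C k, ∑ T ∈ (faces C (k+1)).filter (fun T => S ⊆ T), F S T =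
      ∑ T ∈ faces C (k+1), ∑ i ∈ T, F (T.erase i) T := by
  rw [Finset.sum_comm' (s' := fun T => (faces C k).filter (fun S => S ⊆ T))
    (t' := faces C (k+1))]
  · refine Finset.sum_congr rfl fun T hT => ?_
    obtain ⟨hTC, hTc⟩ := mem_faces.1 hT
    have himg : (faces C k).filter (fun S => S ⊆ T) = T.image (fun i => T.erase i) := by
      ext S
      simp only [Finset.mem_filter, mem_faces, Finset.mem_image]
      constructor
      · rintro ⟨⟨-, hSc⟩, hST⟩
        have h1 : (T \ S).card = 1 := by
          rw [Finset.card_sdiff_of_subset hST]; omega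
        obtain ⟨i, hi⟩ := Finset.card_eq_one.1 h1
        have hiT : i ∈ T \ S := by rw [hi]; simp
        refine ⟨i, (Finset.mem_sdiff.1 hiT).1, ?_⟩
        rw [Finset.erase_eq, ← hi, Finset.sdiff_sdiff_eq_self hST]
      · rintro ⟨i, hi, rfl⟩
        refine ⟨⟨hdown T hTC _ (Finset.erase_subset _ _), ?_⟩, Finset.erase_subset _ _⟩
        rw [Finset.card_erase_of_mem hi]; omega
    rw [himg, Finset.sum_image (Finset.erase_injOn T)]
  · intro S T
    simp only [Finset.mem_filter]
    tauto

/-- A face `R ⊇ S` of cardinality `m` contains exactly `m - k` intermediate faces of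
cardinality `k + 1`, where `k = |S|`. -/
lemma sum_two_step {C : Finset (Finset E)} (hdown : ∀ S ∈ C, ∀ T ⊆ S, T ∈ C) {k : ℕ} (m : ℕ)
    {S : Finset E} (hS : S.card = k) (F : Finset E → ℝ) :
    ∑ Q ∈ (faces C (k+1)).filter (fun Q => S ⊆ Q),
        ∑ R ∈ (faces C m).filter (fun R => Q ⊆ R), F R =
      ((m - k : ℕ) : ℝ) * ∑ R ∈ (faces C m).filter (fun R => S ⊆ R), F R := by
  rw [Finset.sum_comm' (s' := fun R => (faces C (k+1)).filter (fun Q => S ⊆ Q ∧ Q ⊆ R))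
    (t' := (faces C m).filter (fun R => S ⊆ R)), Finset.mul_sum]
  · refine Finset.sum_congr rfl fun R hR => ?_
    obtain ⟨hR, hSR⟩ := Finset.mem_filter.1 hR
    obtain ⟨hRC, hRc⟩ := mem_faces.1 hR
    have himg : (faces C (k+1)).filter (fun Q => S ⊆ Q ∧ Q ⊆ R) =
        (R \ S).image (fun i => insert i S) := by
      ext Q
      simp only [Finset.mem_filter, mem_faces, Finset.mem_image]
      constructor
      · rintro ⟨⟨-, hQc⟩, hSQ, hQR⟩
        have h1 : (Q \ S).card = 1 := by
          rw [Finset.card_sdiff_of_subset hSQ]; omega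
        obtain ⟨i, hi⟩ := Finset.card_eq_one.1 h1
        have hiQ : i ∈ Q \ S := by rw [hi]; simp
        refine ⟨i, Finset.mem_sdiff.2 ⟨hQR (Finset.mem_sdiff.1 hiQ).1,
          (Finset.mem_sdiff.1 hiQ).2⟩, ?_⟩
        rw [Finset.insert_eq, ← hi, Finset.sdiff_union_of_subset hSQ]
      · rintro ⟨i, hi, rfl⟩
        obtain ⟨hiR, hiS⟩ := Finset.mem_sdiff.1 hi
        have hsub : insert i S ⊆ R := Finset.insert_subset hiR hSR
        exact ⟨⟨hdown R hRC _ hsub, by rw [Finset.card_insert_of_notMem hiS, hS]⟩,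
          Finset.subset_insert _ _, hsub⟩
    have hcard : ((R \ S).image (fun i => insert i S)).card = m - k := by
      rw [Finset.card_image_of_injOn, Finset.card_sdiff_of_subset hSR, hRc, hS]
      intro a ha b hb hab
      have ha' := (Finset.mem_sdiff.1 ha).2
      have : a ∈ insert b S := by
        have h : a ∈ insert a S := Finset.mem_insert_self a S
        simpa [show insert a S = insert b S from hab] using h
      rcases Finset.mem_insert.1 this with h | h
      · exact h
      · exact absurd h ha'
    rw [himg, Finset.sum_const, hcard, nsmul_eq_mul]
  · intro Q R
    simp only [Finset.mem_filter]
    constructor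
    · rintro ⟨⟨h1, h2⟩, h3, h4⟩
      exact ⟨⟨h1, h2, h4⟩, h3, h2.trans h4⟩
    · rintro ⟨⟨h1, h2, h4⟩, h3, -⟩
      exact ⟨⟨h1, h2⟩, h3, h4⟩

/-- Faces of the link of `S` correspond to faces containing `S` via `T ↦ S ∪ T`. The summation is
restricted to faces above a given `T₀`, so that it also serves for the up operator of the link. -/
lemma sum_linkFaces {C : Finset (Finset E)} {S T₀ : Finset E} {j : ℕ} (hS : S.card = j)
    (hdisj : S ∩ T₀ = ∅) (m : ℕ) (F : Finset E → ℝ) :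
    ∑ T ∈ (linkFaces C S m).filter (fun T => T₀ ⊆ T), F (S ∪ T) =
      ∑ R ∈ (faces C (j+m)).filter (fun R => S ∪ T₀ ⊆ R), F R := by
  refine Finset.sum_bij' (fun T _ => S ∪ T) (fun R _ => R \ S) ?_ ?_ ?_ ?_ ?_
  · intro T hT
    simp only [linkFaces, Finset.mem_filter] at hT
    obtain ⟨⟨-, hd, hC, hc⟩, hsub⟩ := hT
    refine Finset.mem_filter.2 ⟨mem_faces.2 ⟨hC, ?_⟩, Finset.union_subset_union_right hsub⟩
    rw [Finset.card_union_of_disjoint (Finset.disjoint_iff_inter_eq_empty.2 hd), hS, hc]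
  · intro R hR
    obtain ⟨hR, hsub⟩ := Finset.mem_filter.1 hR
    obtain ⟨hRC, hRc⟩ := mem_faces.1 hR
    have hSR : S ⊆ R := Finset.subset_union_left.trans hsub
    simp only [linkFaces, Finset.mem_filter, Finset.mem_powerset]
    refine ⟨⟨Finset.subset_univ _, Finset.inter_sdiff_self _ _, ?_, ?_⟩, ?_⟩
    · rwa [Finset.union_sdiff_of_subset hSR]
    · rw [Finset.card_sdiff_of_subset hSR]; omega
    · exact Finset.subset_sdiff.2 ⟨Finset.subset_union_right.trans hsub,
        (Finset.disjoint_iff_inter_eq_empty.2 hdisj).symm⟩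
  · intro T hT
    simp only [linkFaces, Finset.mem_filter] at hT
    exact Finset.union_sdiff_cancel_left (Finset.disjoint_iff_inter_eq_empty.2 hT.1.2.1)
  · intro R hR
    obtain ⟨hR, hsub⟩ := Finset.mem_filter.1 hR
    exact Finset.union_sdiff_of_subset (Finset.subset_union_left.trans hsub)
  · intro T hT
    rfl

lemma sum_linkFaces_all {C : Finset (Finset E)} {S : Finset E} {j : ℕ} (hS : S.card = j)
    (m : ℕ) (F : Finset E → ℝ) :
    ∑ T ∈ linkFaces C S m, F (S ∪ T) =
      ∑ R ∈ (faces C (j+m)).filter (fun R => S ⊆ R), F R := by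
  have h := sum_linkFaces (C := C) (T₀ := ∅) hS (by simp) m F
  simpa using h

/-! ### The level distributions -/

section Levels

variable {C : Finset (Finset E)} {d : ℕ} {pid : Finset E → ℝ}

lemma wgt_pos (hC : IsPureComplex C d) (hpid : IsTopDist C d pid) {S : Finset E} (hS : S ∈ C) :
    0 < wgt C d pid S := by
  obtain ⟨T, hTC, hST, hTc⟩ := hC.2.2 S hS
  refine Finset.sum_pos (fun U hU => hpid.1 U (Finset.mem_filter.1 hU).1) ⟨T, ?_⟩
  exact Finset.mem_filter.2 ⟨mem_faces.2 ⟨hTC, hTc⟩, hST⟩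

lemma faces_nonempty (hC : IsPureComplex C d) {k : ℕ} (hk : k ≤ d) : (faces C k).Nonempty := by
  obtain ⟨S, hS⟩ := hC.1
  obtain ⟨T, hTC, -, hTc⟩ := hC.2.2 S hS
  obtain ⟨U, hUT, hUc⟩ := Finset.exists_subset_card_eq (s := T) (n := k) (by omega)
  exact ⟨U, mem_faces.2 ⟨hC.2.1 T hTC U hUT, hUc⟩⟩

lemma wgt_sum_pos (hC : IsPureComplex C d) (hpid : IsTopDist C d pid) {k : ℕ} (hk : k ≤ d) :
    0 < ∑ T ∈ faces C k, wgt C d pid T :=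
  Finset.sum_pos (fun _ hT => wgt_pos hC hpid (mem_faces.1 hT).1) (faces_nonempty hC hk)

lemma piLev_pos (hC : IsPureComplex C d) (hpid : IsTopDist C d pid) {k : ℕ} (hk : k ≤ d)
    {S : Finset E} (hS : S ∈ faces C k) : 0 < piLev C d pid k S := by
  rw [piLev, if_pos hS]
  exact div_pos (wgt_pos hC hpid (mem_faces.1 hS).1) (wgt_sum_pos hC hpid hk)

lemma piLev_sum (hC : IsPureComplex C d) (hpid : IsTopDist C d pid) {k : ℕ} (hk : k ≤ d) :
    ∑ S ∈ faces C k, piLev C d pid k S = 1 := by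
  rw [Finset.sum_congr rfl (g := fun S => wgt C d pid S / ∑ T ∈ faces C k, wgt C d pid T)
    (fun S hS => by rw [piLev, if_pos hS]), ← Finset.sum_div]
  exact div_self (wgt_sum_pos hC hpid hk).ne'

/-- Consistency of consecutive levels: choosing a random `T ∼ π_{k+1}` and removing a uniform
element yields `π_k`. -/
lemma piLev_up_sum (hC : IsPureComplex C d) (hpid : IsTopDist C d pid) {k : ℕ} (hk : k + 1 ≤ d)
    {S : Finset E} (hS : S ∈ faces C k) :
    ∑ T ∈ (faces C (k+1)).filter (fun T => S ⊆ T), piLev C d pid (k+1) T =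
      ((k : ℝ) + 1) * piLev C d pid k S := by
  have hw : ∀ R ∈ faces C k, ∑ T ∈ (faces C (k+1)).filter (fun T => R ⊆ T), wgt C d pid T =
      ((d - k : ℕ) : ℝ) * wgt C d pid R := fun R hR =>
    sum_two_step hC.2.1 d (mem_faces.1 hR).2 pid
  have hZ : ((d - k : ℕ) : ℝ) * ∑ R ∈ faces C k, wgt C d pid R =
      ((k : ℝ) + 1) * ∑ T ∈ faces C (k+1), wgt C d pid T := by
    rw [Finset.mul_sum, ← Finset.sum_congr rfl hw,
      sum_pairs hC.2.1 k (fun _ T => wgt C d pid T), Finset.mul_sum]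
    refine Finset.sum_congr rfl fun T hT => ?_
    rw [Finset.sum_const, (mem_faces.1 hT).2, nsmul_eq_mul]
    push_cast; ring
  have h1 := wgt_sum_pos hC hpid (k := k) (by omega)
  have h2 := wgt_sum_pos hC hpid hk
  rw [Finset.sum_congr rfl (g := fun T => wgt C d pid T / ∑ T ∈ faces C (k+1), wgt C d pid T)
    (fun T hT => by rw [piLev, if_pos (Finset.mem_filter.1 hT).1]), ← Finset.sum_div, hw S hS,
    piLev, if_pos hS]
  field_simp
  linear_combination wgt C d pid S * hZ

/-- The up operator, cleared of its normalising denominator. -/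
lemma piLev_mul_upOp (hC : IsPureComplex C d) (hpid : IsTopDist C d pid) {k : ℕ} (hk : k + 1 ≤ d)
    (f : Finset E → ℝ) {S : Finset E} (hS : S ∈ faces C k) :
    ((k : ℝ) + 1) * (piLev C d pid k S * upOp C d pid k f S) =
      ∑ T ∈ (faces C (k+1)).filter (fun T => S ⊆ T), piLev C d pid (k+1) T * f T := by
  have hp := piLev_pos hC hpid (by omega) hS
  rw [upOp, upWith, piLev_up_sum hC hpid hk hS, ← mul_assoc, Finset.mul_sum]
  refine Finset.sum_congr rfl fun T _ => ?_
  have : (k : ℝ) + 1 ≠ 0 := by positivity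
  field_simp

/-- The up and down operators between two consecutive levels are adjoint. -/
lemma up_down_adjoint (hC : IsPureComplex C d) (hpid : IsTopDist C d pid) {k : ℕ}
    (hk : k + 1 ≤ d) (a b : Finset E → ℝ) :
    ∑ S ∈ faces C k, piLev C d pid k S * (a S * upOp C d pid k b S) =
      ∑ T ∈ faces C (k+1), piLev C d pid (k+1) T * (downOp (k+1) a T * b T) := by
  have h0 : (k : ℝ) + 1 ≠ 0 := by positivity
  apply mul_left_cancel₀ h0
  have h := sum_pairs hC.2.1 k (fun S T => a S * (piLev C d pid (k+1) T * b T))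
  have hl : ∑ S ∈ faces C k, ∑ T ∈ (faces C (k+1)).filter (fun T => S ⊆ T),
      a S * (piLev C d pid (k+1) T * b T) =
      ((k : ℝ) + 1) * ∑ S ∈ faces C k, piLev C d pid k S * (a S * upOp C d pid k b S) := by
    rw [Finset.mul_sum]
    refine Finset.sum_congr rfl fun S hS => ?_
    rw [← Finset.mul_sum, ← piLev_mul_upOp hC hpid hk b hS]
    ring
  rw [← hl, h, Finset.mul_sum]
  refine Finset.sum_congr rfl fun T _ => ?_
  rw [← Finset.sum_mul, downOp]
  push_cast
  field_simp

lemma upOp_one (hC : IsPureComplex C d) (hpid : IsTopDist C d pid) {k : ℕ} (hk : k + 1 ≤ d)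
    {S : Finset E} (hS : S ∈ faces C k) : upOp C d pid k (fun _ => 1) S = 1 := by
  have h := piLev_mul_upOp hC hpid hk (fun _ => 1) hS
  have hp := piLev_pos hC hpid (by omega) hS
  simp only [mul_one] at h
  rw [piLev_up_sum hC hpid hk hS] at h
  have h0 : (k : ℝ) + 1 ≠ 0 := by positivity
  exact mul_left_cancel₀ hp.ne' (by rw [mul_one]; exact mul_left_cancel₀ h0 h)

lemma downOp_one {k : ℕ} {T : Finset E} (hT : T ∈ faces C (k+1)) :
    downOp (k+1) (fun _ => 1) T = 1 := by
  rw [downOp, Finset.sum_const, (mem_faces.1 hT).2]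
  have : (k : ℝ) + 1 ≠ 0 := by positivity
  simp [this]

lemma mean_upOp (hC : IsPureComplex C d) (hpid : IsTopDist C d pid) {k : ℕ}
    (hk : k + 1 ≤ d) (b : Finset E → ℝ) :
    ∑ S ∈ faces C k, piLev C d pid k S * upOp C d pid k b S =
      ∑ T ∈ faces C (k+1), piLev C d pid (k+1) T * b T := by
  have h := up_down_adjoint hC hpid hk (fun _ => 1) b
  simp only [one_mul] at h
  rw [h]
  exact Finset.sum_congr rfl fun T hT => by rw [downOp_one hT, one_mul]

lemma mean_downOp (hC : IsPureComplex C d) (hpid : IsTopDist C d pid) {k : ℕ}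
    (hk : k + 1 ≤ d) (a : Finset E → ℝ) :
    ∑ T ∈ faces C (k+1), piLev C d pid (k+1) T * downOp (k+1) a T =
      ∑ S ∈ faces C k, piLev C d pid k S * a S := by
  have h := up_down_adjoint hC hpid hk a (fun _ => 1)
  simp only [mul_one] at h
  rw [← h]
  exact Finset.sum_congr rfl fun S hS => by rw [upOp_one hC hpid hk hS, mul_one]

lemma upOp_nonneg (hC : IsPureComplex C d) (hpid : IsTopDist C d pid) {k : ℕ} (hk : k + 1 ≤ d)
    {f : Finset E → ℝ} (hf : ∀ T ∈ faces C (k+1), 0 ≤ f T) (S : Finset E) :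
    0 ≤ upOp C d pid k f S := by
  refine Finset.sum_nonneg fun T hT => mul_nonneg (div_nonneg ?_ ?_) ?_
  · exact (piLev_pos hC hpid hk (Finset.mem_filter.1 hT).1).le
  · exact Finset.sum_nonneg fun T' hT' => (piLev_pos hC hpid hk (Finset.mem_filter.1 hT').1).le
  · exact hf T (Finset.mem_filter.1 hT).1

lemma downOp_nonneg (hC : IsPureComplex C d) {k : ℕ}
    {f : Finset E → ℝ} (hf : ∀ S ∈ faces C k, 0 ≤ f S) {T : Finset E} (hT : T ∈ faces C (k+1)) :
    0 ≤ downOp (k+1) f T := by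
  obtain ⟨hTC, hTc⟩ := mem_faces.1 hT
  refine mul_nonneg (by positivity) (Finset.sum_nonneg fun i hi => hf _ (mem_faces.2 ⟨?_, ?_⟩))
  · exact hC.2.1 T hTC _ (Finset.erase_subset _ _)
  · rw [Finset.card_erase_of_mem hi]; omega

lemma piLev_mul_upOp_upOp (hC : IsPureComplex C d) (hpid : IsTopDist C d pid) {j : ℕ}
    (hj : j + 2 ≤ d) (f : Finset E → ℝ) {S : Finset E} (hS : S ∈ faces C j) :
    ((j : ℝ) + 1) * ((j : ℝ) + 2) / 2 *
        (piLev C d pid j S * upOp C d pid j (upOp C d pid (j+1) f) S) =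
      ∑ R ∈ (faces C (j+2)).filter (fun R => S ⊆ R), piLev C d pid (j+2) R * f R := by
  have h1 := piLev_mul_upOp hC hpid (by omega) (upOp C d pid (j+1) f) hS
  have h2 := sum_two_step hC.2.1 (j+2) (mem_faces.1 hS).2
    (fun R => piLev C d pid (j+2) R * f R)
  rw [show j + 2 - j = 2 by omega] at h2
  have h3 : ∑ Q ∈ (faces C (j+1)).filter (fun Q => S ⊆ Q),
      ∑ R ∈ (faces C (j+2)).filter (fun R => Q ⊆ R), piLev C d pid (j+2) R * f R =
      ((j : ℝ) + 2) * ∑ Q ∈ (faces C (j+1)).filter (fun Q => S ⊆ Q),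
        piLev C d pid (j+1) Q * upOp C d pid (j+1) f Q := by
    rw [Finset.mul_sum]
    refine Finset.sum_congr rfl fun Q hQ => ?_
    have := piLev_mul_upOp hC hpid (k := j+1) (by omega) f (Finset.mem_filter.1 hQ).1
    rw [← this]
    push_cast; ring
  rw [h2, ← h1] at h3
  push_cast at h3
  linear_combination -(1/2 : ℝ) * h3

/-! ### Local entropies -/

lemma linkPi_mean_one (hC : IsPureComplex C d) (hpid : IsTopDist C d pid) {j : ℕ}
    (hj : j + 2 ≤ d) (h : Finset E → ℝ) {S : Finset E} (hS : S ∈ faces C j) :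
    ∑ T ∈ linkFaces C S 1, linkPi C d pid S 1 T * h (S ∪ T) = upOp C d pid j h S := by
  have hc := (mem_faces.1 hS).2
  rw [Finset.sum_congr rfl (g := fun T => piLev C d pid (j+1) (S ∪ T) * h (S ∪ T) /
      ∑ T' ∈ linkFaces C S 1, piLev C d pid (j+1) (S ∪ T'))
      (fun T hT => by rw [linkPi, if_pos hT, hc]; ring), ← Finset.sum_div,
    sum_linkFaces_all hc 1 (fun R => piLev C d pid (j+1) R * h R),
    sum_linkFaces_all hc 1 (fun R => piLev C d pid (j+1) R),
    ← piLev_mul_upOp hC hpid (by omega) h hS, piLev_up_sum hC hpid (by omega) hS]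
  have hp := piLev_pos hC hpid (by omega) hS
  have h0 : (j : ℝ) + 1 ≠ 0 := by positivity
  field_simp

lemma piLev_up_two_sum (hC : IsPureComplex C d) (hpid : IsTopDist C d pid) {j : ℕ}
    (hj : j + 2 ≤ d) {S : Finset E} (hS : S ∈ faces C j) :
    ∑ R ∈ (faces C (j+2)).filter (fun R => S ⊆ R), piLev C d pid (j+2) R =
      ((j : ℝ) + 1) * ((j : ℝ) + 2) / 2 * piLev C d pid j S := by
  have h := piLev_mul_upOp_upOp hC hpid hj (fun _ => 1) hS
  simp only [mul_one] at h
  rw [← h]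
  have h1 : upOp C d pid j (upOp C d pid (j+1) fun _ => 1) S = upOp C d pid j (fun _ => 1) S := by
    refine Finset.sum_congr rfl fun T hT => ?_
    rw [upOp_one hC hpid (by omega) (Finset.mem_filter.1 hT).1]
  rw [h1, upOp_one hC hpid (by omega) hS, mul_one]

lemma linkPi_mean_two (hC : IsPureComplex C d) (hpid : IsTopDist C d pid) {j : ℕ}
    (hj : j + 2 ≤ d) (h : Finset E → ℝ) {S : Finset E} (hS : S ∈ faces C j) :
    ∑ T ∈ linkFaces C S 2, linkPi C d pid S 2 T * h (S ∪ T) =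
      upOp C d pid j (upOp C d pid (j+1) h) S := by
  have hc := (mem_faces.1 hS).2
  rw [Finset.sum_congr rfl (g := fun T => piLev C d pid (j+2) (S ∪ T) * h (S ∪ T) /
      ∑ T' ∈ linkFaces C S 2, piLev C d pid (j+2) (S ∪ T'))
      (fun T hT => by rw [linkPi, if_pos hT, hc]; ring), ← Finset.sum_div,
    sum_linkFaces_all hc 2 (fun R => piLev C d pid (j+2) R * h R),
    sum_linkFaces_all hc 2 (fun R => piLev C d pid (j+2) R),
    ← piLev_mul_upOp_upOp hC hpid hj h hS, piLev_up_two_sum hC hpid hj hS]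
  have hp := piLev_pos hC hpid (by omega) hS
  have h0 : (j : ℝ) + 1 ≠ 0 := by positivity
  have h1 : (j : ℝ) + 2 ≠ 0 := by positivity
  field_simp

/-- The up operator of the link is the restriction of the global up operator. -/
lemma linkUp_eq (hC : IsPureComplex C d) (hpid : IsTopDist C d pid) {j : ℕ}
    (hj : j + 2 ≤ d) (f : Finset E → ℝ) {S T : Finset E} (hS : S ∈ faces C j)
    (hT : T ∈ linkFaces C S 1) :
    linkUp C d pid S 1 (fun T => f (S ∪ T)) T = upOp C d pid (j+1) f (S ∪ T) := by
  have hc := (mem_faces.1 hS).2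
  have hdisj : S ∩ T = ∅ := by
    simp only [linkFaces, Finset.mem_filter] at hT
    exact hT.2.1
  set N := ∑ T' ∈ linkFaces C S 2, piLev C d pid (j+2) (S ∪ T') with hN
  have hNpos : 0 < N := by
    rw [hN, sum_linkFaces_all hc 2 (fun R => piLev C d pid (j+2) R),
      piLev_up_two_sum hC hpid hj hS]
    have hp := piLev_pos hC hpid (by omega) hS
    positivity
  have hpi : ∀ T' ∈ (linkFaces C S 2).filter (fun T' => T ⊆ T'),
      linkPi C d pid S 2 T' = piLev C d pid (j+2) (S ∪ T') / N := fun T' hT' => by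
    rw [linkPi, if_pos (Finset.mem_filter.1 hT').1, hc]
  have hden : ∑ T' ∈ (linkFaces C S 2).filter (fun T' => T ⊆ T'), linkPi C d pid S 2 T' =
      (∑ R ∈ (faces C (j+2)).filter (fun R => S ∪ T ⊆ R), piLev C d pid (j+2) R) / N := by
    rw [Finset.sum_congr rfl hpi, ← Finset.sum_div,
      sum_linkFaces hc hdisj 2 (fun R => piLev C d pid (j+2) R)]
  change ∑ T' ∈ (linkFaces C S 2).filter (fun T' => T ⊆ T'), (linkPi C d pid S 2 T' /
    ∑ T' ∈ (linkFaces C S 2).filter (fun T' => T ⊆ T'), linkPi C d pid S 2 T') * f (S ∪ T') = _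
  rw [hden, upOp, upWith, ← sum_linkFaces hc hdisj 2 (fun R => piLev C d pid (j+1+1) R /
    (∑ R ∈ (faces C (j+1+1)).filter (fun R => S ∪ T ⊆ R), piLev C d pid (j+1+1) R) * f R)]
  refine Finset.sum_congr rfl fun T' hT' => ?_
  rw [hpi T' hT', div_div_div_cancel_right₀ hNpos.ne']

/-- Averaging the local entropy contraction over `S ∼ π_j`: the entropy of `f` relative to level
`j` dominates `c` times that of its projection to level `j + 1`. -/
lemma local_to_global (hC : IsPureComplex C d) (hpid : IsTopDist C d pid) {j : ℕ}
    (hj : j + 2 ≤ d) (c : ℝ)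
    (hloc : ∀ S ∈ faces C j, ∀ g : Finset E → ℝ, (∀ T ∈ linkFaces C S 2, 0 ≤ g T) →
      pEnt (linkPi C d pid S 2) (linkFaces C S 2) g ≥
        c * pEnt (linkPi C d pid S 1) (linkFaces C S 1) (linkUp C d pid S 1 g))
    (f : Finset E → ℝ) (hf : ∀ T ∈ faces C (j+2), 0 ≤ f T) :
    pEnt (piLev C d pid (j+2)) (faces C (j+2)) f -
        pEnt (piLev C d pid j) (faces C j) (upOp C d pid j (upOp C d pid (j+1) f)) ≥
      c * (pEnt (piLev C d pid (j+1)) (faces C (j+1)) (upOp C d pid (j+1) f) -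
        pEnt (piLev C d pid j) (faces C j) (upOp C d pid j (upOp C d pid (j+1) f))) := by
  set f₁ := upOp C d pid (j+1) f with hf₁
  set f₀ := upOp C d pid j f₁ with hf₀
  have hm0 : ∑ S ∈ faces C j, piLev C d pid j S * f₀ S =
      ∑ T ∈ faces C (j+1), piLev C d pid (j+1) T * f₁ T := mean_upOp hC hpid (by omega) f₁
  have hm1 : ∑ S ∈ faces C (j+1), piLev C d pid (j+1) S * f₁ S =
      ∑ T ∈ faces C (j+2), piLev C d pid (j+2) T * f T := mean_upOp hC hpid (by omega) f
  have hl2 : ∑ S ∈ faces C j, piLev C d pid j S * upOp C d pid j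
        (upOp C d pid (j+1) (fun R => f R * Real.log (f R))) S =
      ∑ R ∈ faces C (j+2), piLev C d pid (j+2) R * (f R * Real.log (f R)) := by
    rw [mean_upOp hC hpid (by omega), mean_upOp hC hpid (by omega)]
  have hl1 : ∑ S ∈ faces C j, piLev C d pid j S * upOp C d pid j
        (fun R => f₁ R * Real.log (f₁ R)) S =
      ∑ R ∈ faces C (j+1), piLev C d pid (j+1) R * (f₁ R * Real.log (f₁ R)) := by
    rw [mean_upOp hC hpid (by omega)]
  have hsum : ∑ S ∈ faces C j, piLev C d pid j S * (c * (upOp C d pid j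
        (fun R => f₁ R * Real.log (f₁ R)) S - f₀ S * Real.log (f₀ S))) ≤
      ∑ S ∈ faces C j, piLev C d pid j S * (upOp C d pid j
        (upOp C d pid (j+1) (fun R => f R * Real.log (f R))) S - f₀ S * Real.log (f₀ S)) := by
    refine Finset.sum_le_sum fun S hS => mul_le_mul_of_nonneg_left ?_
      (piLev_pos hC hpid (by omega) hS).le
    have h := hloc S hS (fun T => f (S ∪ T)) (fun T hT => by
      simp only [linkFaces, Finset.mem_filter] at hT
      refine hf _ (mem_faces.2 ⟨hT.2.2.1, ?_⟩)
      rw [Finset.card_union_of_disjoint (Finset.disjoint_iff_inter_eq_empty.2 hT.2.1), hT.2.2.2,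
        (mem_faces.1 hS).2])
    have e2 : pEnt (linkPi C d pid S 2) (linkFaces C S 2) (fun T => f (S ∪ T)) =
        upOp C d pid j (upOp C d pid (j+1) (fun R => f R * Real.log (f R))) S -
          f₀ S * Real.log (f₀ S) := by
      rw [pEnt, linkPi_mean_two hC hpid hj f hS,
        linkPi_mean_two hC hpid hj (fun R => f R * Real.log (f R)) hS]
    have e1 : pEnt (linkPi C d pid S 1) (linkFaces C S 1)
          (linkUp C d pid S 1 (fun T => f (S ∪ T))) =
        upOp C d pid j (fun R => f₁ R * Real.log (f₁ R)) S - f₀ S * Real.log (f₀ S) := by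
      have hc1 : ∑ T ∈ linkFaces C S 1,
          linkPi C d pid S 1 T * linkUp C d pid S 1 (fun T => f (S ∪ T)) T = f₀ S := by
        rw [hf₀, ← linkPi_mean_one hC hpid hj f₁ hS]
        exact Finset.sum_congr rfl fun T hT => by rw [linkUp_eq hC hpid hj f hS hT]
      rw [pEnt, hc1, ← linkPi_mean_one hC hpid hj (fun R => f₁ R * Real.log (f₁ R)) hS]
      congr 1
      exact Finset.sum_congr rfl fun T hT => by rw [linkUp_eq hC hpid hj f hS hT]
    rw [e2, e1] at h
    exact h
  simp only [mul_sub, Finset.sum_sub_distrib, mul_left_comm _ c, ← Finset.mul_sum] at hsum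
  rw [hl1, hl2] at hsum
  simp only [pEnt, hm0, hm1]
  linarith

end Levels

/-! ### Global entropy contraction -/

section Contraction

variable {C : Finset (Finset E)} {d : ℕ} {pid : Finset E → ℝ}

lemma one_le_vOfS {s : ℕ → ℝ} {n : ℕ} (hs : ∀ j ≤ n, 1 ≤ s j) : 1 ≤ vOfS s n := by
  induction n with
  | zero => exact hs 0 le_rfl
  | succ n ih =>
    have hv := ih fun j hj => hs j (by omega)
    have h1 := hs (n+1) le_rfl
    have h2 : (s (n+1) - 1) / vOfS s n ≤ s (n+1) - 1 := div_le_self (by linarith) hv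
    rw [vOfS]
    linarith

lemma pEnt_nonneg (hC : IsPureComplex C d) (hpid : IsTopDist C d pid) {k : ℕ} (hk : k ≤ d)
    {f : Finset E → ℝ} (hf : ∀ x ∈ faces C k, 0 ≤ f x) :
    0 ≤ pEnt (piLev C d pid k) (faces C k) f := by
  have h := Real.convexOn_mul_log.map_sum_le (t := faces C k) (w := piLev C d pid k) (p := f)
    (fun x hx => (piLev_pos hC hpid hk hx).le) (piLev_sum hC hpid hk) (fun x hx => hf x hx)
  simp only [smul_eq_mul] at h
  rw [pEnt]
  linarith

/-- Level `0` consists of the empty face alone, so its entropy vanishes. -/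
lemma pEnt_level_zero (hC : IsPureComplex C d) (hpid : IsTopDist C d pid) (f : Finset E → ℝ) :
    pEnt (piLev C d pid 0) (faces C 0) f = 0 := by
  have h0 : faces C 0 = {∅} := by
    obtain ⟨S, hS⟩ := hC.1
    ext T
    simp only [mem_faces, Finset.card_eq_zero, Finset.mem_singleton]
    exact ⟨fun h => h.2, fun h => ⟨h ▸ hC.2.1 S hS ∅ (Finset.empty_subset _), h⟩⟩
  have h1 := piLev_sum hC hpid (Nat.zero_le d)
  rw [h0, Finset.sum_singleton] at h1
  simp [pEnt, h0, h1]

/-- Entropy contraction by the factor `1 / v_j` when projecting from level `j + 2` to `j + 1`. -/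
lemma entropy_contraction (hC : IsPureComplex C d) (hpid : IsTopDist C d pid)
    (s : ℕ → ℝ) (hs : ∀ j ≤ d - 2, 1 ≤ s j)
    (hloc : ∀ k, 2 ≤ k → k ≤ d → ∀ S ∈ faces C (k-2), ∀ g : Finset E → ℝ,
      (∀ T ∈ linkFaces C S 2, 0 ≤ g T) →
      pEnt (linkPi C d pid S 2) (linkFaces C S 2) g ≥
        s (k-2) * pEnt (linkPi C d pid S 1) (linkFaces C S 1) (linkUp C d pid S 1 g))
    (j : ℕ) (hj : j + 2 ≤ d) (f : Finset E → ℝ) (hf : ∀ T ∈ faces C (j+2), 0 ≤ f T) :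
    vOfS s j * pEnt (piLev C d pid (j+1)) (faces C (j+1)) (upOp C d pid (j+1) f) ≤
      pEnt (piLev C d pid (j+2)) (faces C (j+2)) f := by
  induction j generalizing f with
  | zero =>
    have h := local_to_global hC hpid hj (s 0) (hloc 2 le_rfl hj) f hf
    rw [pEnt_level_zero hC hpid] at h
    rw [vOfS]
    simp only [sub_zero] at h
    exact h
  | succ j ih =>
    have h := local_to_global hC hpid hj (s (j+1))
      (fun S hS => hloc (j+3) (by omega) (by omega) S hS) f hf
    have hprev := ih (by omega) (upOp C d pid (j+1+1) f)
      (fun T _ => upOp_nonneg hC hpid (by omega) hf T)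
    have hv : 1 ≤ vOfS s j := one_le_vOfS fun i hi => hs i (by omega)
    have h1 := hs (j+1) (by omega)
    rw [vOfS]
    set A := pEnt (piLev C d pid (j+1+1)) (faces C (j+1+1)) (upOp C d pid (j+1+1) f)
    set B := pEnt (piLev C d pid (j+1)) (faces C (j+1))
      (upOp C d pid (j+1) (upOp C d pid (j+1+1) f))
    have hB : B ≤ A / vOfS s j := (le_div_iff₀' (by linarith)).2 hprev
    have h2 : (s (j+1) - 1) * B ≤ (s (j+1) - 1) * (A / vOfS s j) :=
      mul_le_mul_of_nonneg_left hB (by linarith)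
    have h3 : (s (j+1) - (s (j+1) - 1) / vOfS s j) * A =
        s (j+1) * A - (s (j+1) - 1) * (A / vOfS s j) := by ring
    rw [h3]
    linarith

/-- Data processing: the down operator does not increase entropy, by convexity of `x log x`. -/
lemma pEnt_downOp_le (hC : IsPureComplex C d) (hpid : IsTopDist C d pid) {k : ℕ} (hk : k + 1 ≤ d)
    {f : Finset E → ℝ} (hf : ∀ x ∈ faces C k, 0 ≤ f x) :
    pEnt (piLev C d pid (k+1)) (faces C (k+1)) (downOp (k+1) f) ≤
      pEnt (piLev C d pid k) (faces C k) f := by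
  rw [pEnt, pEnt, mean_downOp hC hpid hk f, ← mean_downOp hC hpid hk (fun x => f x * Real.log (f x))]
  refine sub_le_sub_right (Finset.sum_le_sum fun T hT => mul_le_mul_of_nonneg_left ?_
    (piLev_pos hC hpid hk hT).le) _
  obtain ⟨hTC, hTc⟩ := mem_faces.1 hT
  have h0 : (k : ℝ) + 1 ≠ 0 := by positivity
  have h := Real.convexOn_mul_log.map_sum_le (t := T) (w := fun _ => 1 / ((k+1 : ℕ) : ℝ))
    (p := fun i => f (T.erase i)) (fun _ _ => by positivity)
    (by rw [Finset.sum_const, hTc]; simp [h0])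
    (fun i hi => hf _ (mem_faces.2 ⟨hC.2.1 T hTC _ (Finset.erase_subset _ _), by
      rw [Finset.card_erase_of_mem hi]; omega⟩))
  simp only [smul_eq_mul, ← Finset.mul_sum] at h
  exact h

/-- The entropy variational principle in pointwise form. -/
lemma gibbs_pointwise {a b : ℝ} (ha : 0 < a) (hb : 0 ≤ b) :
    b * Real.log a ≤ b * Real.log b + (a - b) := by
  rcases hb.eq_or_lt with rfl | hb
  · simp [ha.le]
  · have h := Real.log_le_sub_one_of_pos (div_pos ha hb)
    rw [Real.log_div ha.ne' hb.ne'] at h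
    have h2 := mul_le_mul_of_nonneg_left h hb.le
    have h3 : b * (a / b - 1) = a - b := by field_simp
    linarith

/-- The Dirichlet form of the up-down walk is at least the entropy dissipated in one step. -/
lemma dirichlet_ge (hC : IsPureComplex C d) (hpid : IsTopDist C d pid) {k : ℕ} (hk : k + 1 ≤ d)
    {f : Finset E → ℝ} (hf : ∀ x ∈ faces C k, 0 < f x) :
    pEnt (piLev C d pid k) (faces C k) f -
        pEnt (piLev C d pid k) (faces C k) (upDown C d pid k f) ≤
      pDiri (piLev C d pid k) (faces C k) (upDown C d pid k) f (fun x => Real.log (f x)) := by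
  set G := upDown C d pid k f with hG
  have hGnn : ∀ x, 0 ≤ G x := fun x =>
    upOp_nonneg hC hpid hk (fun T hT => downOp_nonneg hC (fun x hx => (hf x hx).le) hT) x
  have hmean : ∑ x ∈ faces C k, piLev C d pid k x * G x =
      ∑ x ∈ faces C k, piLev C d pid k x * f x := by
    rw [hG, upDown, mean_upOp hC hpid hk, mean_downOp hC hpid hk]
  -- reversibility moves the walk from `log f` onto `f`
  have hrev : ∑ x ∈ faces C k, piLev C d pid k x *
        (f x * upDown C d pid k (fun x => Real.log (f x)) x) =
      ∑ x ∈ faces C k, piLev C d pid k x * (Real.log (f x) * G x) := by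
    rw [hG, upDown, upDown, up_down_adjoint hC hpid hk, up_down_adjoint hC hpid hk]
    exact Finset.sum_congr rfl fun T _ => by ring
  have hgibbs : ∑ x ∈ faces C k, piLev C d pid k x * (G x * Real.log (f x)) ≤
      ∑ x ∈ faces C k, piLev C d pid k x * (G x * Real.log (G x) + (f x - G x)) :=
    Finset.sum_le_sum fun x hx => mul_le_mul_of_nonneg_left
      (gibbs_pointwise (hf x hx) (hGnn x)) (piLev_pos hC hpid (by omega) hx).le
  simp only [mul_add, mul_sub, Finset.sum_add_distrib, Finset.sum_sub_distrib] at hgibbs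
  simp only [mul_comm (Real.log _)] at hrev
  simp only [pDiri, pEnt, hmean, mul_sub, Finset.sum_sub_distrib, mul_assoc]
  rw [hrev]
  linarith

/-- For `1 ≤ k < d` some positive function has nonzero entropy: there are at least two faces of
cardinality `k`, and `x log x` is strictly convex. -/
lemma exists_pEnt_ne_zero (hC : IsPureComplex C d) (hpid : IsTopDist C d pid) {k : ℕ}
    (hk1 : 1 ≤ k) (hk : k + 1 ≤ d) :
    ∃ f : Finset E → ℝ, (∀ x ∈ faces C k, 0 < f x) ∧ pEnt (piLev C d pid k) (faces C k) f ≠ 0 := by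
  obtain ⟨T, hT⟩ := faces_nonempty hC hk
  obtain ⟨hTC, hTc⟩ := mem_faces.1 hT
  obtain ⟨a, b, ha, hb, hab⟩ := Finset.one_lt_card_iff.1 (show 1 < T.card by omega)
  have hmem : ∀ i ∈ T, T.erase i ∈ faces C k := fun i hi =>
    mem_faces.2 ⟨hC.2.1 T hTC _ (Finset.erase_subset _ _), by
      rw [Finset.card_erase_of_mem hi]; omega⟩
  have hne : T.erase a ≠ T.erase b := fun h => hab (Finset.erase_injOn T ha hb h)
  let f : Finset E → ℝ := fun x => if x = T.erase a then 2 else 1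
  have hfpos : ∀ x, 0 < f x := fun x => by
    simp only [f]; split_ifs <;> norm_num
  refine ⟨f, fun x _ => hfpos x, ?_⟩
  have h := Real.strictConvexOn_mul_log.map_sum_lt (t := faces C k) (w := piLev C d pid k) (p := f)
    (fun x hx => piLev_pos hC hpid (by omega) hx) (piLev_sum hC hpid (by omega))
    (fun x _ => (hfpos x).le) ⟨_, hmem a ha, _, hmem b hb, by simp [f, hne.symm]⟩
  simp only [smul_eq_mul] at h
  rw [pEnt]
  exact (sub_pos.2 h).ne'

end Contraction

/-- **Modified log-Sobolev constant of the up-down walk.** Under the local entropy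
contraction hypothesis, `ρ(P_k^∧) ≥ 1 - 1/v_{k-1}` for every `1 ≤ k ≤ d-1`. -/
theorem mls_up_down {E : Type*} [Fintype E] [DecidableEq E]
    (C : Finset (Finset E)) (d : ℕ) (pid : Finset E → ℝ)
(hC : IsPureComplex C d) (hpid : IsTopDist C d pid)
    (s : ℕ → ℝ) (hs : ∀ j ≤ d - 2, 1 ≤ s j)
    (hloc : ∀ k, 2 ≤ k → k ≤ d → ∀ S ∈ faces C (k-2), ∀ g : Finset E → ℝ,
      (∀ T ∈ linkFaces C S 2, 0 ≤ g T) →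
      pEnt (linkPi C d pid S 2) (linkFaces C S 2) g ≥
        s (k-2) * pEnt (linkPi C d pid S 1) (linkFaces C S 1) (linkUp C d pid S 1 g))
    (k : ℕ) (hk1 : 1 ≤ k) (hkd : k ≤ d - 1) :
    mlsConst (piLev C d pid k) (faces C k) (upDown C d pid k) ≥ 1 - 1 / vOfS s (k-1) := by
  obtain ⟨j, rfl⟩ : ∃ j, k = j + 1 := ⟨k - 1, by omega⟩
  have hv : 1 ≤ vOfS s j := one_le_vOfS fun i hi => hs i (by omega)
  rw [Nat.add_sub_cancel]
  refine le_csInf ?_ ?_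
  · obtain ⟨f, hf, hne⟩ := exists_pEnt_ne_zero hC hpid hk1 (by omega)
    exact ⟨_, f, hf, hne, rfl⟩
  · rintro r ⟨f, hf, hne, rfl⟩
    have hfnn : ∀ x ∈ faces C (j+1), 0 ≤ f x := fun x hx => (hf x hx).le
    have hpos := lt_of_le_of_ne (pEnt_nonneg hC hpid (by omega) hfnn) hne.symm
    have hdir := dirichlet_ge hC hpid (by omega) hf
    have hcon := entropy_contraction hC hpid s hs hloc j (by omega) (downOp (j+1+1) f)
      (fun T hT => downOp_nonneg hC hfnn hT)
    have hdown := pEnt_downOp_le hC hpid (by omega) hfnn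
    have hG : pEnt (piLev C d pid (j+1)) (faces C (j+1)) (upDown C d pid (j+1) f) ≤
        pEnt (piLev C d pid (j+1)) (faces C (j+1)) f / vOfS s j :=
      (le_div_iff₀' (by linarith)).2 (hcon.trans hdown)
    rw [le_div_iff₀ hpos, sub_mul, one_mul, one_div_mul_eq_div]
    linarith
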